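/- Let K and H be convex bodies in ℝ^d such that L_K(s) = L_H(s) for all real s > 0. Then L_{ppyr K}(s) = L_{ppyr H}(s) for all real s > 0; that is, the pseudopyramids of K and H have equal real Ehrhart functions. -/

import Mathlib

open Set MeasureTheory
open scoped Pointwise

/-- The set of integer lattice points in `ℝ^d`. -/
def latticePts (d : ℕ) : Set (EuclideanSpace ℝ (Fin d)) :=
  {x | ∀ i, ∃ n : ℤ, x i = (n : ℝ)}

/-- The real Ehrhart function `L_K(s) = #(sK ∩ ℤ^d)`. -/
noncomputable def ehrhart (d : ℕ) (K : Set (EuclideanSpace ℝ (Fin d))) (s : ℝ) : ℕ :=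
  (s • K ∩ latticePts d).ncard

/-- The pseudopyramid of `K`: the union of the dilates `λK` for `λ ∈ [0, 1]`. -/
def ppyr (d : ℕ) (K : Set (EuclideanSpace ℝ (Fin d))) : Set (EuclideanSpace ℝ (Fin d)) :=
  ⋃ l ∈ Set.Icc (0 : ℝ) 1, l • K

/-!
The nonzero lattice points of `s • ppyr K` are those which the dilates `t • K` meet for `0 < t ≤ s`;
sort them by the least such `t`. Let `u < t` be close to `t`. Since `K` is compact, a lattice point
outside `t • K` is outside `u • K`; since `K` is convex, a point of `t • K` which some dilate met
before time `t` is still in `u • K`. Hence the number of lattice points met first at time `t` is the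
jump `L_K(t) - L_K(t⁻)`, and these jumps over `0 < t ≤ s` add up to `L_{ppyr K}(s) - 1`.
-/

open Filter Topology

theorem ncard_biUnion_congr {ι α β : Type*} {I : Set ι} {A : ι → Set α} {B : ι → Set β}
    (hA : I.PairwiseDisjoint A) (hB : I.PairwiseDisjoint B)
    (hA_fin : ∀ i ∈ I, (A i).Finite) (hB_fin : ∀ i ∈ I, (B i).Finite)
    (hcard : ∀ i ∈ I, (A i).ncard = (B i).ncard) :
    (⋃ i ∈ I, A i).ncard = (⋃ i ∈ I, B i).ncard := by
  have fiberEquiv (i : I) : Nonempty (A i ≃ B i) := by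
    have := (hA_fin i i.2).to_subtype
    have := (hB_fin i i.2).to_subtype
    exact Finite.card_eq.1 (hcard i i.2)
  exact Nat.card_congr <| (biUnionEqSigmaOfDisjoint hA).trans <|
    (Equiv.sigmaCongrRight fun i ↦ (fiberEquiv i).some).trans (biUnionEqSigmaOfDisjoint hB).symm

section Dilates

variable {E : Type*} [AddCommGroup E] [Module ℝ E] {K : Set E} {x : E} {s t u : ℝ}

/-- The set `K` is convex along rays: it meets every open ray from the origin in an interval. The
condition is phrased through the times `t` at which the dilate `t • K` contains a given point. -/
def RayConvex (K : Set E) : Prop :=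
  ∀ x : E, {t : ℝ | 0 < t ∧ x ∈ t • K}.OrdConnected

theorem rayConvex_of_convex (hK : Convex ℝ K) : RayConvex K := by
  refine fun x ↦ ⟨fun v hv t ht u hu ↦ ?_⟩
  have hu_pos : 0 < u := hv.1.trans_le hu.1
  have scalars_convex : Convex ℝ {r : ℝ | r • x ∈ K} :=
    hK.linear_preimage (LinearMap.toSpanSingleton ℝ E x)
  have htx : t⁻¹ • x ∈ K := (mem_smul_set_iff_inv_smul_mem₀ ht.1.ne' _ _).1 ht.2
  have hvx : v⁻¹ • x ∈ K := (mem_smul_set_iff_inv_smul_mem₀ hv.1.ne' _ _).1 hv.2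
  have hux : u⁻¹ • x ∈ K :=
    scalars_convex.ordConnected.out htx hvx ⟨inv_anti₀ hu_pos hu.2, inv_anti₀ hv.1 hu.1⟩
  exact ⟨hu_pos, (mem_smul_set_iff_inv_smul_mem₀ hu_pos.ne' _ _).2 hux⟩

/-- The points which the dilates `u • K`, with `u` increasing from `0`, meet first at `u = t`. -/
def dilateFront (K : Set E) (t : ℝ) : Set E :=
  t • K \ Ioo 0 t • K

theorem dilateFront_subset : dilateFront K t ⊆ t • K :=
  sdiff_subset

theorem disjoint_smul_dilateFront (hu : 0 < u) (hut : u < t) :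
    Disjoint (u • K) (dilateFront K t) :=
  disjoint_sdiff_right.mono_left (smul_set_subset_smul (mem_Ioo.2 ⟨hu, hut⟩))

theorem pairwiseDisjoint_dilateFront (K : Set E) : (Ioi 0).PairwiseDisjoint (dilateFront K) := by
  intro t ht u hu htu
  rcases htu.lt_or_gt with h | h
  · exact (disjoint_smul_dilateFront ht h).mono_left dilateFront_subset
  · exact ((disjoint_smul_dilateFront hu h).mono_left dilateFront_subset).symm

theorem zero_notMem_dilateFront (ht : 0 < t) : (0 : E) ∉ dilateFront K t := by
  rintro ⟨h_mem, h_notMem⟩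
  have hK : (0 : E) ∈ K := (zero_mem_smul_set_iff ht.ne').1 h_mem
  exact h_notMem ⟨t / 2, ⟨half_pos ht, half_lt_self ht⟩, 0, hK, smul_zero _⟩

section Topology

variable [TopologicalSpace E] [ContinuousSMul ℝ E]

theorem exists_mem_dilateFront [IsTopologicalAddGroup E] [T2Space E] (hK : IsCompact K)
    (hx : x ≠ 0) (hs : 0 < s) (hxs : x ∈ s • K) : ∃ t ∈ Ioc 0 s, x ∈ dilateFront K t := by
  have scalars_compact : IsCompact {r : ℝ | r • x ∈ K} :=
    (isClosedEmbedding_smul_left hx).isCompact_preimage hK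
  obtain ⟨r, ⟨hrK, hsr : s⁻¹ ≤ r⟩, hr_max⟩ :=
    (scalars_compact.inter_right isClosed_Ici).exists_isGreatest
      ⟨s⁻¹, (mem_smul_set_iff_inv_smul_mem₀ hs.ne' _ _).1 hxs, self_mem_Ici⟩
  have hr : 0 < r := (inv_pos.2 hs).trans_le hsr
  refine ⟨r⁻¹, ⟨inv_pos.2 hr, inv_le_of_inv_le₀ hs hsr⟩,
    (mem_inv_smul_set_iff₀ hr.ne' _ _).2 hrK, ?_⟩
  rintro ⟨u, ⟨hu, hur⟩, hxu : x ∈ u • K⟩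
  have hru : r < u⁻¹ := (lt_inv_comm₀ hr hu).2 hur
  have hxu' : u⁻¹ • x ∈ K := (mem_smul_set_iff_inv_smul_mem₀ hu.ne' _ _).1 hxu
  exact hru.not_ge (hr_max ⟨hxu', hsr.trans hru.le⟩)

theorem biUnion_dilateFront [IsTopologicalAddGroup E] [T2Space E] (hK : IsCompact K) (s : ℝ) :
    ⋃ t ∈ Ioc 0 s, dilateFront K t = (Ioc 0 s • K) \ {0} := by
  refine Subset.antisymm (iUnion₂_subset fun t ht x hx ↦ ⟨?_, ?_⟩) ?_
  · exact smul_set_subset_smul ht (dilateFront_subset hx)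
  · rintro rfl
    exact zero_notMem_dilateFront ht.1 hx
  · rintro x ⟨⟨t, ht, hxt⟩, hx0⟩
    obtain ⟨u, hu, hxu⟩ := exists_mem_dilateFront hK hx0 ht.1 hxt
    exact mem_biUnion ⟨hu.1, hu.2.trans ht.2⟩ hxu

theorem Icc_zero_smul_eq_union_dilateFront [IsTopologicalAddGroup E] [T2Space E]
    (hK : IsCompact K) (hK_ne : K.Nonempty) (hs : 0 ≤ s) :
    Icc 0 s • K = {0} ∪ ⋃ t ∈ Ioc 0 s, dilateFront K t := by
  rw [biUnion_dilateFront hK, union_sdiff_self, ← Ioc_insert_left hs, insert_eq, union_smul,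
    singleton_smul, zero_smul_set hK_ne, singleton_zero]

theorem RayConvex.eventually_mem_smul_iff (hray : RayConvex K) (hK : IsClosed K) (ht : 0 < t)
    (x : E) : ∀ᶠ u in 𝓝[<] t, (x ∈ t • K ↔ x ∈ u • K ∨ x ∈ dilateFront K t) := by
  by_cases hxt : x ∈ t • K
  · by_cases hx_front : x ∈ dilateFront K t
    · exact .of_forall fun u ↦ iff_of_true hxt (.inr hx_front)
    · obtain ⟨v, ⟨hv, hvt⟩, hxv⟩ : x ∈ Ioo 0 t • K := by_contra fun h ↦ hx_front ⟨hxt, h⟩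
      filter_upwards [Ioo_mem_nhdsLT hvt] with u hu
      exact iff_of_true hxt (.inl ((hray x).out ⟨hv, hxv⟩ ⟨ht, hxt⟩ (Ioo_subset_Icc_self hu)).2)
  · have hcont : ContinuousAt (fun u : ℝ ↦ u⁻¹ • x) t :=
      (continuousAt_inv₀ ht.ne').smul continuousAt_const
    have hxt' : t⁻¹ • x ∈ Kᶜ := mt (mem_smul_set_iff_inv_smul_mem₀ ht.ne' _ _).2 hxt
    have h_near : ∀ᶠ u in 𝓝[<] t, u⁻¹ • x ∈ Kᶜ :=
      (hcont.eventually (hK.isOpen_compl.mem_nhds hxt')).filter_mono nhdsWithin_le_nhds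
    filter_upwards [h_near, Ioo_mem_nhdsLT ht] with u hu hut
    refine iff_of_false hxt (not_or_intro ?_ (notMem_subset dilateFront_subset hxt))
    exact mt (mem_smul_set_iff_inv_smul_mem₀ hut.1.ne' _ _).1 hu

section LocallyFinite

variable {Λ : Set E}

theorem finite_dilateFront_inter (hK : IsCompact K)
    (hΛ : ∀ C : Set E, IsCompact C → (C ∩ Λ).Finite) (t : ℝ) : (dilateFront K t ∩ Λ).Finite :=
  (hΛ _ (hK.smul t)).subset (inter_subset_inter_left _ dilateFront_subset)

theorem RayConvex.eventually_ncard_smul_inter [T2Space E] (hray : RayConvex K) (hK : IsCompact K)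
    (hΛ : ∀ C : Set E, IsCompact C → (C ∩ Λ).Finite) (ht : 0 < t) :
    ∀ᶠ u in 𝓝[<] t,
      (t • K ∩ Λ).ncard = (u • K ∩ Λ).ncard + (dilateFront K t ∩ Λ).ncard := by
  have swept_finite : (Icc 0 t • K ∩ Λ).Finite := hΛ _ (isCompact_Icc.smul_set hK)
  filter_upwards [Ioo_mem_nhdsLT ht, (eventually_all_finite swept_finite).2 fun x _ ↦
    hray.eventually_mem_smul_iff hK.isClosed ht x] with u ⟨hu, hut⟩ h_mem
  have u_subset : u • K ⊆ Icc 0 t • K := smul_set_subset_smul ⟨hu.le, hut.le⟩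
  have t_subset : t • K ⊆ Icc 0 t • K := smul_set_subset_smul ⟨ht.le, le_rfl⟩
  have split : t • K ∩ Λ = (u • K ∩ Λ) ∪ (dilateFront K t ∩ Λ) := by
    rw [← union_inter_distrib_right]
    ext x
    refine and_congr_left fun hxΛ ↦ ⟨fun hx ↦ (h_mem x ⟨t_subset hx, hxΛ⟩).1 hx, fun hx ↦ ?_⟩
    have hx_swept := hx.elim (@u_subset x) fun h ↦ t_subset (dilateFront_subset h)
    exact (h_mem x ⟨hx_swept, hxΛ⟩).2 hx
  rw [split, ncard_union_eq
    ((disjoint_smul_dilateFront hu hut).mono inter_subset_left inter_subset_left)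
    (hΛ _ (hK.smul u)) (finite_dilateFront_inter hK hΛ t)]

theorem ncard_dilateFront_inter_congr [T2Space E] {K H : Set E} (hK : IsCompact K)
    (hH : IsCompact H) (hKray : RayConvex K) (hHray : RayConvex H)
    (hΛ : ∀ C : Set E, IsCompact C → (C ∩ Λ).Finite)
    (h : ∀ s : ℝ, 0 < s → (s • K ∩ Λ).ncard = (s • H ∩ Λ).ncard) (ht : 0 < t) :
    (dilateFront K t ∩ Λ).ncard = (dilateFront H t ∩ Λ).ncard := by
  obtain ⟨u, hu, hKu, hHu⟩ := ((eventually_mem_set.2 (Ioo_mem_nhdsLT ht)).and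
    ((hKray.eventually_ncard_smul_inter hK hΛ ht).and
      (hHray.eventually_ncard_smul_inter hH hΛ ht))).exists
  rw [h t ht, h u hu.1] at hKu
  exact Nat.add_left_cancel (hKu.symm.trans hHu)

theorem ncard_Icc_smul_inter [IsTopologicalAddGroup E] [T2Space E] (hK : IsCompact K)
    (hK_ne : K.Nonempty) (hΛ : ∀ C : Set E, IsCompact C → (C ∩ Λ).Finite) (hs : 0 ≤ s) :
    (Icc 0 s • K ∩ Λ).ncard =
      ({0} ∩ Λ).ncard + (⋃ t ∈ Ioc 0 s, dilateFront K t ∩ Λ).ncard := by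
  have fronts_subset : ⋃ t ∈ Ioc 0 s, dilateFront K t ⊆ Icc 0 s • K :=
    Icc_zero_smul_eq_union_dilateFront hK hK_ne hs ▸ subset_union_right
  have fronts_finite : ((⋃ t ∈ Ioc 0 s, dilateFront K t) ∩ Λ).Finite :=
    (hΛ _ (isCompact_Icc.smul_set hK)).subset (inter_subset_inter_left _ fronts_subset)
  have h_disj : Disjoint {0} (⋃ t ∈ Ioc 0 s, dilateFront K t) := by
    rw [biUnion_dilateFront hK]
    exact disjoint_sdiff_right
  rw [Icc_zero_smul_eq_union_dilateFront hK hK_ne hs, union_inter_distrib_right,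
    ncard_union_eq (h_disj.mono inter_subset_left inter_subset_left)
      ((finite_singleton 0).inter_of_left Λ) fronts_finite,
    iUnion₂_inter]

theorem ncard_Icc_smul_inter_congr [IsTopologicalAddGroup E] [T2Space E] {K H : Set E}
    (hK : IsCompact K) (hH : IsCompact H) (hK_ne : K.Nonempty) (hH_ne : H.Nonempty)
    (hKray : RayConvex K) (hHray : RayConvex H)
    (hΛ : ∀ C : Set E, IsCompact C → (C ∩ Λ).Finite)
    (h : ∀ s : ℝ, 0 < s → (s • K ∩ Λ).ncard = (s • H ∩ Λ).ncard) (hs : 0 ≤ s) :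
    (Icc 0 s • K ∩ Λ).ncard = (Icc 0 s • H ∩ Λ).ncard := by
  have fronts_disjoint (L : Set E) : (Ioc 0 s).PairwiseDisjoint fun t ↦ dilateFront L t ∩ Λ :=
    ((pairwiseDisjoint_dilateFront L).subset Ioc_subset_Ioi_self).mono fun _ ↦ inter_subset_left
  rw [ncard_Icc_smul_inter hK hK_ne hΛ hs, ncard_Icc_smul_inter hH hH_ne hΛ hs,
    ncard_biUnion_congr (fronts_disjoint K) (fronts_disjoint H)
      (fun t _ ↦ finite_dilateFront_inter hK hΛ t) (fun t _ ↦ finite_dilateFront_inter hH hΛ t)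
      fun t ht ↦ ncard_dilateFront_inter_congr hK hH hKray hHray hΛ h ht.1]

end LocallyFinite

end Topology

end Dilates

theorem latticePts_eq_span (d : ℕ) :
    latticePts d =
      Submodule.span ℤ (range (EuclideanSpace.basisFun (Fin d) ℝ).toBasis) := by
  ext x
  rw [SetLike.mem_coe, Module.Basis.mem_span_iff_repr_mem]
  simp [latticePts, eq_comm]

theorem finite_inter_latticePts {d : ℕ} {B : Set (EuclideanSpace ℝ (Fin d))}
    (hB : Bornology.IsBounded B) : (B ∩ latticePts d).Finite := by
  rw [latticePts_eq_span]
  exact ZSpan.setFinite_inter _ hB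

theorem smul_ppyr {d : ℕ} (K : Set (EuclideanSpace ℝ (Fin d))) {s : ℝ} (hs : 0 < s) :
    s • ppyr d K = Icc 0 s • K := by
  rw [ppyr, iUnion_smul_set, ← smul_assoc, LinearOrderedField.smul_Icc hs, mul_zero, mul_one]

theorem ehrhart_ppyr_eq_of_ehrhart_eq_general
    (d : ℕ) (K H : Set (EuclideanSpace ℝ (Fin d)))
    (hKc : IsCompact K) (hKray : RayConvex K) (hK_ne : K.Nonempty)
    (hHc : IsCompact H) (hHray : RayConvex H) (hH_ne : H.Nonempty)
    (h : ∀ s : ℝ, 0 < s → ehrhart d K s = ehrhart d H s) :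
    ∀ s : ℝ, 0 < s → ehrhart d (ppyr d K) s = ehrhart d (ppyr d H) s := by
  intro s hs
  rw [ehrhart, ehrhart, smul_ppyr K hs, smul_ppyr H hs]
  exact ncard_Icc_smul_inter_congr hKc hHc hK_ne hH_ne hKray hHray
    (fun C hC ↦ finite_inter_latticePts hC.isBounded) h hs.le

theorem ehrhart_ppyr_eq_of_ehrhart_eq
    (d : ℕ) (K H : Set (EuclideanSpace ℝ (Fin d)))
    (hKc : IsCompact K) (hKconv : Convex ℝ K) (hKint : (interior K).Nonempty)
    (hHc : IsCompact H) (hHconv : Convex ℝ H) (hHint : (interior H).Nonempty)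
    (h : ∀ s : ℝ, 0 < s → ehrhart d K s = ehrhart d H s) :
    ∀ s : ℝ, 0 < s → ehrhart d (ppyr d K) s = ehrhart d (ppyr d H) s :=
  ehrhart_ppyr_eq_of_ehrhart_eq_general d K H
    hKc (rayConvex_of_convex hKconv) (hKint.mono interior_subset)
    hHc (rayConvex_of_convex hHconv) (hHint.mono interior_subset) h
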